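/- arXiv:1807.09000 — 3 statements merged into one kernel-verified Lean document; each statement's English description precedes it below -/
import Mathlib

section
/- Theorem 1 (occlusion-sensitive speakers prefer more specific utterances). Let u₀ be more specific than u₁ (E_{u₀} ⊊ E_{u₁}), let o^t ∈ C be the target with ℒ u₀ o^t = 1 and ℒ u₁ o^t = 1, let P be a hidden-object prior such that every object o with P(o) > 0 satisfies o ∈ C or ℒ u₀ o = 0, and suppose there exists an object o* ∉ C with ℒ u₁ o* = 1, ℒ u₀ o* = 0, and P(o*) > 0. Then for every α > 0 and every cost function, S_asym(u₀)/S_asym(u₁) > S_ego(u₀)/S_ego(u₁). -/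
open Finset Real

noncomputable section

/-- Literal listener: `L0 ℒ C u o = ℒ u o / ∑ o' ∈ C, ℒ u o'`. -/
def L0 {O 𝒰 : Type*} (ℒ : 𝒰 → O → ℝ) (C : Finset O) (u : 𝒰) (o : O) : ℝ :=
  ℒ u o / ∑ o' ∈ C, ℒ u o'

/-- Egocentric utility. -/
def Uego {O 𝒰 : Type*} (ℒ : 𝒰 → O → ℝ) (C : Finset O) (oT : O) (cost : 𝒰 → ℝ) (u : 𝒰) : ℝ :=
  Real.log (L0 ℒ C u oT) - cost u

/-- Asymmetric (occlusion-sensitive) utility. -/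
def Uasym {O 𝒰 : Type*} [DecidableEq O] [Fintype O] (ℒ : 𝒰 → O → ℝ) (C : Finset O) (oT : O)
    (P : O → ℝ) (cost : 𝒰 → ℝ) (u : 𝒰) : ℝ :=
  (∑ oh : O, P oh * Real.log (L0 ℒ (insert oh C) u oT)) - cost u

/-- Softmax distribution over utterances. -/
def softmax {𝒰 : Type*} [Fintype 𝒰] (α : ℝ) (U : 𝒰 → ℝ) (u : 𝒰) : ℝ :=
  Real.exp (α * U u) / ∑ u' : 𝒰, Real.exp (α * U u')

/-!
A softmax ratio depends only on the difference of the two utilities. A hidden object of weight zero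
under `u₀` leaves the literal listener of `u₀` unchanged, so both speakers assign `u₀` the same
utility. A hidden object of positive weight under `u₁` dilutes the literal listener of `u₁`, so
averaging over hidden objects strictly lowers the utility of `u₁`.
-/

theorem sum_le_sum_insert {ι M : Type*} [DecidableEq ι] [AddCommMonoid M] [PartialOrder M]
    [IsOrderedAddMonoid M] {s : Finset ι} {f : ι → M} {a : ι} (ha : 0 ≤ f a) :
    ∑ i ∈ s, f i ≤ ∑ i ∈ insert a s, f i := by
  by_cases has : a ∈ s
  · rw [insert_eq_of_mem has]
  · rw [sum_insert has]
    exact le_add_of_nonneg_left ha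

section WeightedAverage

variable {ι R : Type*} [Semiring R] {s : Finset ι} {w f : ι → R} {c : R}

theorem sum_mul_eq_of_sum_eq_one (hw : ∑ i ∈ s, w i = 1) (hf : ∀ i ∈ s, w i ≠ 0 → f i = c) :
    ∑ i ∈ s, w i * f i = c := by
  have hterm : ∀ i ∈ s, w i * f i = w i * c := fun i hi => by
    by_cases hwi : w i = 0
    · rw [hwi, zero_mul, zero_mul]
    · rw [hf i hi hwi]
  rw [sum_congr rfl hterm, ← sum_mul, hw, one_mul]

theorem sum_mul_lt_of_sum_eq_one [PartialOrder R] [IsStrictOrderedRing R]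
    (hw₀ : ∀ i ∈ s, 0 ≤ w i) (hw : ∑ i ∈ s, w i = 1) (hf : ∀ i ∈ s, f i ≤ c)
    (hlt : ∃ i ∈ s, 0 < w i ∧ f i < c) : ∑ i ∈ s, w i * f i < c := by
  obtain ⟨j, hj, hwj, hfj⟩ := hlt
  calc ∑ i ∈ s, w i * f i
      < ∑ i ∈ s, w i * c :=
        sum_lt_sum (fun i hi => mul_le_mul_of_nonneg_left (hf i hi) (hw₀ i hi))
          ⟨j, hj, mul_lt_mul_of_pos_left hfj hwj⟩
    _ = c := by rw [← sum_mul, hw, one_mul]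

end WeightedAverage

section Softmax

variable {𝒰 : Type*} [Fintype 𝒰]

theorem softmax_div_softmax (α : ℝ) (U : 𝒰 → ℝ) (u v : 𝒰) :
    softmax α U u / softmax α U v = exp (α * (U u - U v)) := by
  have hZ : ∑ u', exp (α * U u') ≠ 0 := (sum_pos (fun _ _ => exp_pos _) ⟨u, mem_univ u⟩).ne'
  rw [softmax, softmax, div_div_div_cancel_right₀ hZ, ← exp_sub, mul_sub]

theorem softmax_div_softmax_lt_iff {α : ℝ} (hα : 0 < α) {U V : 𝒰 → ℝ} {u v : 𝒰} :
    softmax α U u / softmax α U v < softmax α V u / softmax α V v ↔ U u - U v < V u - V v := by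
  rw [softmax_div_softmax, softmax_div_softmax, exp_lt_exp, mul_lt_mul_iff_right₀ hα]

end Softmax

section LiteralListener

variable {O 𝒰 : Type*} {ℒ : 𝒰 → O → ℝ} {C : Finset O} {u : 𝒰} {o a : O}

theorem L0_pos (ho : 0 < ℒ u o) (hC : 0 < ∑ o' ∈ C, ℒ u o') : 0 < L0 ℒ C u o :=
  div_pos ho hC

variable [DecidableEq O]

theorem L0_insert_of_eq_zero_if_notMem (ha : a ∉ C → ℒ u a = 0) :
    L0 ℒ (insert a C) u o = L0 ℒ C u o := by
  rw [L0, L0, sum_insert_of_eq_zero_if_notMem ha]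

theorem log_L0_insert_le (ha : 0 ≤ ℒ u a) (ho : 0 < ℒ u o) (hC : 0 < ∑ o' ∈ C, ℒ u o') :
    log (L0 ℒ (insert a C) u o) ≤ log (L0 ℒ C u o) :=
  have hle := sum_le_sum_insert ha
  log_le_log (L0_pos ho (hC.trans_le hle)) (div_le_div_of_nonneg_left ho.le hC hle)

theorem log_L0_insert_lt (haC : a ∉ C) (ha : 0 < ℒ u a) (ho : 0 < ℒ u o)
    (hC : 0 < ∑ o' ∈ C, ℒ u o') : log (L0 ℒ (insert a C) u o) < log (L0 ℒ C u o) := by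
  have hlt : ∑ o' ∈ C, ℒ u o' < ∑ o' ∈ insert a C, ℒ u o' := by
    rw [sum_insert haC]
    exact lt_add_of_pos_left _ ha
  exact log_lt_log (L0_pos ho (hC.trans hlt)) (div_lt_div_of_pos_left ho hC hlt)

end LiteralListener

section Utility

variable {O 𝒰 : Type*} [DecidableEq O] [Fintype O] {ℒ : 𝒰 → O → ℝ} {C : Finset O} {oT : O}
  {P : O → ℝ} {cost : 𝒰 → ℝ} {u : 𝒰}

theorem Uasym_eq_Uego (hPsum : ∑ o, P o = 1) (hP : ∀ o, P o ≠ 0 → o ∉ C → ℒ u o = 0) :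
    Uasym ℒ C oT P cost u = Uego ℒ C oT cost u := by
  rw [Uasym, Uego, sum_mul_eq_of_sum_eq_one hPsum fun o _ ho =>
    congrArg log (L0_insert_of_eq_zero_if_notMem (hP o ho))]

theorem Uasym_lt_Uego (hu : ∀ o, 0 ≤ ℒ u o) (hoT : oT ∈ C) (huT : 0 < ℒ u oT)
    (hP : ∀ o, 0 ≤ P o) (hPsum : ∑ o, P o = 1) (hex : ∃ o ∉ C, 0 < ℒ u o ∧ 0 < P o) :
    Uasym ℒ C oT P cost u < Uego ℒ C oT cost u := by
  obtain ⟨o, hoC, huo, hPo⟩ := hex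
  have hC : 0 < ∑ o' ∈ C, ℒ u o' := sum_pos' (fun o' _ => hu o') ⟨oT, hoT, huT⟩
  have havg : ∑ oh, P oh * log (L0 ℒ (insert oh C) u oT) < log (L0 ℒ C u oT) :=
    sum_mul_lt_of_sum_eq_one (fun oh _ => hP oh) hPsum
      (fun oh _ => log_L0_insert_le (hu oh) huT hC)
      ⟨o, mem_univ o, hPo, log_L0_insert_lt hoC huo huT hC⟩
  exact sub_lt_sub_right havg (cost u)

end Utility

/- `Real.log 0` is `0` rather than `-∞`, so the utilities model surprisal only for utterances that
have positive weight at `oT`. -/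
theorem occlusion_sensitive_prefers_specific_general
    {O 𝒰 : Type*} [DecidableEq O] [Fintype O] [Fintype 𝒰]
    {ℒ : 𝒰 → O → ℝ} (hL : ∀ u o, 0 ≤ ℒ u o) {u₀ u₁ : 𝒰}
    {C : Finset O} {oT : O} (hoT : oT ∈ C) (_h0 : 0 < ℒ u₀ oT) (h1 : 0 < ℒ u₁ oT)
    {P : O → ℝ} (hP : ∀ o, 0 ≤ P o) (hPsum : ∑ o, P o = 1)
    (hPsupp : ∀ o, 0 < P o → o ∈ C ∨ ℒ u₀ o = 0)
    (hstar : ∃ os ∉ C, 0 < ℒ u₁ os ∧ 0 < P os)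
    {α : ℝ} (hα : 0 < α) (cost : 𝒰 → ℝ) :
    softmax α (Uego ℒ C oT cost) u₀ / softmax α (Uego ℒ C oT cost) u₁ <
      softmax α (Uasym ℒ C oT P cost) u₀ / softmax α (Uasym ℒ C oT P cost) u₁ := by
  have heq : Uasym ℒ C oT P cost u₀ = Uego ℒ C oT cost u₀ :=
    Uasym_eq_Uego hPsum fun o ho => (hPsupp o ((hP o).lt_of_ne' ho)).resolve_left
  have hlt : Uasym ℒ C oT P cost u₁ < Uego ℒ C oT cost u₁ :=
    Uasym_lt_Uego (hL u₁) hoT h1 hP hPsum hstar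
  rw [softmax_div_softmax_lt_iff hα, heq]
  exact sub_lt_sub_left hlt _

/-- Theorem 1: occlusion-sensitive speakers prefer more specific utterances. -/
theorem occlusion_sensitive_prefers_specific
    {O 𝒰 : Type*} [DecidableEq O] [Fintype O] [Fintype 𝒰] [Nonempty 𝒰]
    (ℒ : 𝒰 → O → ℝ) (hL : ∀ u o, ℒ u o = 0 ∨ ℒ u o = 1)
    (u₀ u₁ : 𝒰) (hspec : {o : O | ℒ u₀ o = 1} ⊂ {o : O | ℒ u₁ o = 1})
    (C : Finset O) (oT : O) (hoT : oT ∈ C)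
    (h0 : ℒ u₀ oT = 1) (h1 : ℒ u₁ oT = 1)
    (P : O → ℝ) (hP : ∀ o, 0 ≤ P o) (hPsum : ∑ o : O, P o = 1)
    (hPsupp : ∀ o, 0 < P o → o ∈ C ∨ ℒ u₀ o = 0)
    (hstar : ∃ os, os ∉ C ∧ ℒ u₁ os = 1 ∧ ℒ u₀ os = 0 ∧ 0 < P os)
    (α : ℝ) (hα : 0 < α) (cost : 𝒰 → ℝ) :
    softmax α (Uasym ℒ C oT P cost) u₀ / softmax α (Uasym ℒ C oT P cost) u₁ >
      softmax α (Uego ℒ C oT cost) u₀ / softmax α (Uego ℒ C oT cost) u₁ := by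
  have hnonneg : ∀ u o, 0 ≤ ℒ u o := fun u o => (hL u o).elim Eq.ge fun h => h ▸ zero_le_one
  obtain ⟨os, hosC, hos1, -, hPos⟩ := hstar
  exact occlusion_sensitive_prefers_specific_general hnonneg hoT (h0 ▸ one_pos) (h1 ▸ one_pos)
    hP hPsum hPsupp ⟨os, hosC, hos1 ▸ one_pos, hPos⟩ hα cost

end
end

section
/- Utility-difference form of Theorem 1. Let u₀ be more specific than u₁ (E_{u₀} ⊊ E_{u₁}), let o^t ∈ C be the target with ℒ u₀ o^t = 1 and ℒ u₁ o^t = 1, let P be a hidden-object prior such that every object o with P(o) > 0 satisfies o ∈ C or ℒ u₀ o = 0, and suppose there exists an object o* ∉ C with ℒ u₁ o* = 1, ℒ u₀ o* = 0, and P(o*) > 0. Then ∑_{o_h : O} P(o_h)·(log L₀(o^t | u₀, C ∪ {o_h}) − log L₀(o^t | u₁, C ∪ {o_h})) > log L₀(o^t | u₀, C) − log L₀(o^t | u₁, C). -/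
open Finset Real

noncomputable section

/-!
Adding an object `o ∉ C` to the context divides the literal listener's probability of the target by
`1 + L0 ℒ C u o`, where for `o ∉ C` the number `L0 ℒ C u o` is not a probability but the weight of
`o` relative to the total weight of the context. A hidden object therefore moves the utility
difference in favour of whichever utterance gives it the smaller relative weight. An object outside
the extension of `u₀` has relative weight `0` under `u₀`, so it can only help `u₀`, and it helps
strictly when `u₁` is true of it; averaging over the prior preserves the strict inequality.
-/

theorem lt_of_hasSum_mul_of_hasSum_one {ι : Type*} {w f : ι → ℝ} {c E : ℝ}
    (hw : ∀ i, 0 ≤ w i) (hw_one : HasSum w 1) (hE : HasSum (fun i => w i * f i) E)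
    (hle : ∀ i, 0 < w i → c ≤ f i) (hlt : ∃ i, 0 < w i ∧ c < f i) : c < E := by
  obtain ⟨j, hwj, hcj⟩ := hlt
  have hc : HasSum (fun i => w i * c) c := by simpa only [one_mul] using hw_one.mul_right c
  have hterm : ∀ i, w i * c ≤ w i * f i := fun i => by
    rcases (hw i).eq_or_lt with hwi | hwi
    · rw [← hwi, zero_mul, zero_mul]
    · exact mul_le_mul_of_nonneg_left (hle i hwi) (hw i)
  have hterm_lt : w j * c < w j * f j := mul_lt_mul_of_pos_left hcj hwj
  exact hasSum_lt hterm hterm_lt hc hE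

section LiteralListener

variable {O 𝒰 : Type*} {ℒ : 𝒰 → O → ℝ} {C : Finset O} {u u₀ u₁ : 𝒰} {o t : O}

theorem L0_nonneg (hu : ∀ o, 0 ≤ ℒ u o) : 0 ≤ L0 ℒ C u o :=
  div_nonneg (hu o) (sum_nonneg fun o' _ => hu o')

theorem L0_eq_zero (ho : ℒ u o = 0) : L0 ℒ C u o = 0 := by
  rw [L0, ho, zero_div]

theorem sum_pos_of_mem (hu : ∀ o, 0 ≤ ℒ u o) (ht : t ∈ C) (hut : 0 < ℒ u t) :
    0 < ∑ o' ∈ C, ℒ u o' :=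
  sum_pos' (fun o' _ => hu o') ⟨t, ht, hut⟩

theorem L0_pos_s1 (hu : ∀ o, 0 ≤ ℒ u o) (ht : t ∈ C) (hut : 0 < ℒ u t) (huo : 0 < ℒ u o) :
    0 < L0 ℒ C u o :=
  div_pos huo (sum_pos_of_mem hu ht hut)

variable [DecidableEq O]

theorem L0_insert (hC : ∑ o' ∈ C, ℒ u o' ≠ 0) (ho : o ∉ C) :
    L0 ℒ (insert o C) u t = L0 ℒ C u t / (1 + L0 ℒ C u o) := by
  rw [L0, L0, L0, sum_insert ho, one_add_div hC, div_div_div_cancel_right₀ hC, add_comm]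

theorem log_L0_insert (hu : ∀ o, 0 ≤ ℒ u o) (ht : t ∈ C) (hut : 0 < ℒ u t) (ho : o ∉ C) :
    log (L0 ℒ (insert o C) u t) = log (L0 ℒ C u t) - log (1 + L0 ℒ C u o) := by
  rw [L0_insert (sum_pos_of_mem hu ht hut).ne' ho,
    log_div (L0_pos_s1 hu ht hut hut).ne' (add_pos_of_pos_of_nonneg one_pos (L0_nonneg hu)).ne']

/-- The utility of `u₀` minus that of `u₁` for conveying `o` in context `C`, where the utility of an
utterance is the log-probability that the literal listener assigns to `o`. -/
def utilityDiff (ℒ : 𝒰 → O → ℝ) (u₀ u₁ : 𝒰) (C : Finset O) (o : O) : ℝ :=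
  log (L0 ℒ C u₀ o) - log (L0 ℒ C u₁ o)

theorem utilityDiff_insert (hℒ : ∀ u o, 0 ≤ ℒ u o) (ht : t ∈ C) (h₀ : 0 < ℒ u₀ t)
    (h₁ : 0 < ℒ u₁ t) (ho : o ∉ C) :
    utilityDiff ℒ u₀ u₁ (insert o C) t =
      utilityDiff ℒ u₀ u₁ C t + (log (1 + L0 ℒ C u₁ o) - log (1 + L0 ℒ C u₀ o)) := by
  rw [utilityDiff, utilityDiff, log_L0_insert (hℒ u₀) ht h₀ ho, log_L0_insert (hℒ u₁) ht h₁ ho]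
  ring

theorem utilityDiff_le_utilityDiff_insert (hℒ : ∀ u o, 0 ≤ ℒ u o) (ht : t ∈ C)
    (h₀ : 0 < ℒ u₀ t) (h₁ : 0 < ℒ u₁ t) (ho : o ∈ C ∨ L0 ℒ C u₀ o ≤ L0 ℒ C u₁ o) :
    utilityDiff ℒ u₀ u₁ C t ≤ utilityDiff ℒ u₀ u₁ (insert o C) t := by
  by_cases hoC : o ∈ C
  · rw [insert_eq_of_mem hoC]
  · rw [utilityDiff_insert hℒ ht h₀ h₁ hoC, le_add_iff_nonneg_right, sub_nonneg]
    exact log_le_log (add_pos_of_pos_of_nonneg one_pos (L0_nonneg (hℒ u₀)))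
      (add_le_add_right (ho.resolve_left hoC) 1)

theorem utilityDiff_lt_utilityDiff_insert (hℒ : ∀ u o, 0 ≤ ℒ u o) (ht : t ∈ C)
    (h₀ : 0 < ℒ u₀ t) (h₁ : 0 < ℒ u₁ t) (hoC : o ∉ C) (ho : L0 ℒ C u₀ o < L0 ℒ C u₁ o) :
    utilityDiff ℒ u₀ u₁ C t < utilityDiff ℒ u₀ u₁ (insert o C) t := by
  rw [utilityDiff_insert hℒ ht h₀ h₁ hoC, lt_add_iff_pos_right, sub_pos]
  exact log_lt_log (add_pos_of_pos_of_nonneg one_pos (L0_nonneg (hℒ u₀)))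
    (add_lt_add_right ho 1)

theorem asym_utility_difference_gt_ego_general (hℒ : ∀ u o, 0 ≤ ℒ u o) (ht : t ∈ C)
    (h₀ : 0 < ℒ u₀ t) (h₁ : 0 < ℒ u₁ t) {P : O → ℝ} (hP : ∀ o, 0 ≤ P o) (hP_one : HasSum P 1)
    (hP_supp : ∀ o, 0 < P o → o ∈ C ∨ L0 ℒ C u₀ o ≤ L0 ℒ C u₁ o)
    (hstar : ∃ o, o ∉ C ∧ L0 ℒ C u₀ o < L0 ℒ C u₁ o ∧ 0 < P o)
    {E : ℝ} (hE : HasSum (fun o => P o * utilityDiff ℒ u₀ u₁ (insert o C) t) E) :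
    utilityDiff ℒ u₀ u₁ C t < E := by
  obtain ⟨o, hoC, ho, hPo⟩ := hstar
  exact lt_of_hasSum_mul_of_hasSum_one hP hP_one hE
    (fun o hPo => utilityDiff_le_utilityDiff_insert hℒ ht h₀ h₁ (hP_supp o hPo))
    ⟨o, hPo, utilityDiff_lt_utilityDiff_insert hℒ ht h₀ h₁ hoC ho⟩

end LiteralListener

/-- Utility-difference form of Theorem 1. -/
theorem asym_utility_difference_gt_ego
    {O 𝒰 : Type*} [DecidableEq O] [Fintype O]
    (ℒ : 𝒰 → O → ℝ) (hL : ∀ u o, ℒ u o = 0 ∨ ℒ u o = 1)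
    (u₀ u₁ : 𝒰) (hspec : {o : O | ℒ u₀ o = 1} ⊂ {o : O | ℒ u₁ o = 1})
    (C : Finset O) (oT : O) (hoT : oT ∈ C)
    (h0 : ℒ u₀ oT = 1) (h1 : ℒ u₁ oT = 1)
    (P : O → ℝ) (hP : ∀ o, 0 ≤ P o) (hPsum : ∑ o : O, P o = 1)
    (hPsupp : ∀ o, 0 < P o → o ∈ C ∨ ℒ u₀ o = 0)
    (hstar : ∃ os, os ∉ C ∧ ℒ u₁ os = 1 ∧ ℒ u₀ os = 0 ∧ 0 < P os) :
    (∑ oh : O, P oh *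
        (Real.log (L0 ℒ (insert oh C) u₀ oT) - Real.log (L0 ℒ (insert oh C) u₁ oT))) >
      Real.log (L0 ℒ C u₀ oT) - Real.log (L0 ℒ C u₁ oT) := by
  have hℒ : ∀ u o, 0 ≤ ℒ u o := fun u o => (hL u o).elim Eq.ge fun h => zero_le_one.trans h.ge
  have pos_of_true : ∀ {u o}, ℒ u o = 1 → 0 < ℒ u o := fun h => one_pos.trans_eq h.symm
  obtain ⟨os, hosC, hos₁, hos₀, hPos⟩ := hstar
  have hle : ∀ o, ℒ u₀ o = 0 → L0 ℒ C u₀ o ≤ L0 ℒ C u₁ o := fun o ho =>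
    (L0_eq_zero ho).trans_le (L0_nonneg (hℒ u₁))
  have hlt : L0 ℒ C u₀ os < L0 ℒ C u₁ os :=
    (L0_eq_zero hos₀).trans_lt (L0_pos_s1 (hℒ u₁) hoT (pos_of_true h1) (pos_of_true hos₁))
  exact asym_utility_difference_gt_ego_general hℒ hoT (pos_of_true h0) (pos_of_true h1) hP
    (hPsum ▸ hasSum_fintype P) (fun o hPo => (hPsupp o hPo).imp_right (hle o))
    ⟨os, hosC, hlt, hPos⟩ (hasSum_fintype _)

end
end

section
/- Weak specificity lemma for the literal listener. Let u₀ and u₁ be utterances with E_{u₀} ⊆ E_{u₁}, let C be a finset of objects, and let o^t ∈ C be a target with ℒ u₀ o^t = 1 and ℒ u₁ o^t = 1. Then L₀(o^t | u₀, C) ≥ L₀(o^t | u₁, C); that is, among utterances true of the target, a more specific utterance never gives the literal listener a lower probability of selecting the target. -/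
open Finset Real

noncomputable section

section ZeroOneValued

variable {R : Type*} [Zero R] [One R] [Preorder R] {a b : R}

theorem nonneg_of_eq_zero_or_eq_one [ZeroLEOneClass R] (ha : a = 0 ∨ a = 1) : 0 ≤ a := by
  rcases ha with rfl | rfl
  exacts [le_rfl, zero_le_one]

theorem le_of_eq_one_imp_eq_one (ha : a = 0 ∨ a = 1) (hb : 0 ≤ b) (hab : a = 1 → b = 1) :
    a ≤ b := by
  rcases ha with ha | ha
  · exact ha.trans_le hb
  · exact (ha.trans (hab ha).symm).le

end ZeroOneValued

-- For graded truth values, pointwise domination on the context replaces inclusion of extensions.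
theorem listener_le_of_more_specific_general {O 𝒰 : Type*} {ℒ : 𝒰 → O → ℝ} {u₀ u₁ : 𝒰}
    {C : Finset O} {oT : O} (hnonneg : ∀ o ∈ C, 0 ≤ ℒ u₀ o)
    (hspec : ∀ o ∈ C, ℒ u₀ o ≤ ℒ u₁ o) (hoT : oT ∈ C) (hpos : 0 < ℒ u₀ oT)
    (htarget : ℒ u₀ oT = ℒ u₁ oT) : L0 ℒ C u₁ oT ≤ L0 ℒ C u₀ oT := by
  have hsum_pos : 0 < ∑ o ∈ C, ℒ u₀ o := sum_pos' hnonneg ⟨oT, hoT, hpos⟩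
  have hsum_le : ∑ o ∈ C, ℒ u₀ o ≤ ∑ o ∈ C, ℒ u₁ o := sum_le_sum hspec
  exact div_le_div₀ hpos.le htarget.ge hsum_pos hsum_le

/-- Weak specificity lemma for the literal listener. -/
theorem listener_le_of_more_specific
    {O 𝒰 : Type*}
    (ℒ : 𝒰 → O → ℝ) (hL : ∀ u o, ℒ u o = 0 ∨ ℒ u o = 1)
    (u₀ u₁ : 𝒰) (hspec : {o : O | ℒ u₀ o = 1} ⊆ {o : O | ℒ u₁ o = 1})
    (C : Finset O) (oT : O) (hoT : oT ∈ C)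
    (h0 : ℒ u₀ oT = 1) (h1 : ℒ u₁ oT = 1) :
    L0 ℒ C u₀ oT ≥ L0 ℒ C u₁ oT := by
  have hnonneg (u : 𝒰) (o : O) : 0 ≤ ℒ u o := nonneg_of_eq_zero_or_eq_one (hL u o)
  have hle (o : O) : ℒ u₀ o ≤ ℒ u₁ o :=
    le_of_eq_one_imp_eq_one (hL u₀ o) (hnonneg u₁ o) (@hspec o)
  exact listener_le_of_more_specific_general (fun o _ => hnonneg u₀ o) (fun o _ => hle o) hoT
    (zero_lt_one.trans_eq h0.symm) (h0.trans h1.symm)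

end
end
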